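/- Let H be a separable real Hilbert space with orthonormal basis (e_i)_{i≥1}, and let z : H → ℝ be Fréchet differentiable, Lipschitz with constant L₀, and with Fréchet derivative Dz Lipschitz with constant L₁. Let ρ ∈ C_c^∞(ℝ) with support in [−1,1], ρ ≥ 0, ∫ρ = 1, and ρ_h(t) = h⁻¹ρ(t/h). Fix η > 0, set η_i = η·2^{−i}, and for k ≥ 1 define z^{η,k}(x) = ∫_{ℝ^k} z( Σ_{i≤k} y_i e_i + Σ_{i>k} ⟨x,e_i⟩ e_i ) ∏_{i=1}^k ρ_{η_i}(⟨x,e_i⟩ − y_i) dy₁…dy_k. Then: (a) z^{η,k} converges uniformly on H as k → ∞ to a function z^η which is Fréchet differentiable, L₀-Lipschitz, and with Dz^η Lipschitz with constant L₁; (b) sup_H |z^η − z| ≤ L₀ η and sup_H ‖Dz^η − Dz‖ ≤ L₁ η; (c) for every x ∈ H there exists a bounded self-adjoint operator A(x) on H with ‖A(x)‖ ≤ L₁ such that for all h, k ∈ H, lim_{t→0} t⁻¹ ⟨Dz^η(x + t k) − Dz^η(x), h⟩ = ⟨A(x)k, h⟩, and for fixed h, k the map x ↦ ⟨A(x)k,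 h⟩ is uniformly continuous on H. (Regularity part of the Lions-type partial convolution approximation, Lemma on z^η.) -/

import Mathlib

open Filter
open scoped RealInnerProductSpace Topology

noncomputable section

/-- The Lions-type partial convolution of `z : H → ℝ` along the first `k` basis
directions, with mollification parameters `η_i = η·2^{-i}` (`i = 1,…,k`, so the `i`-th
basis direction, `0`-based, uses `η/2^(i+1)`):
`z^{η,k}(x) = ∫_{ℝ^k} z( Σ_{i≤k} y_i e_i + Σ_{i>k} ⟨x,e_i⟩ e_i ) ∏_{i=1}^k ρ_{η_i}(⟨x,e_i⟩ - y_i) dy`,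
where the tail sum `Σ_{i>k} ⟨x,e_i⟩ e_i` is written as `x - Σ_{i≤k} ⟨x,e_i⟩ e_i`
(the basis being complete). -/
def partialConv {H : Type*} [NormedAddCommGroup H] [InnerProductSpace ℝ H]
    (e : ℕ → H) (ρ : ℝ → ℝ) (η : ℝ) (k : ℕ) (z : H → ℝ) (x : H) : ℝ :=
  ∫ y : Fin k → ℝ,
    z ((∑ i : Fin k, y i • e (i : ℕ)) + (x - ∑ i : Fin k, ⟪x, e (i : ℕ)⟫ • e (i : ℕ))) *
      ∏ i : Fin k,
        (η / 2 ^ ((i : ℕ) + 1))⁻¹ *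
          ρ ((⟪x, e (i : ℕ)⟫ - y i) / (η / 2 ^ ((i : ℕ) + 1)))

open MeasureTheory

lemma uniformContinuous_of_norm_sub_le {H E : Type*} [NormedAddCommGroup H]
    [NormedAddCommGroup E] {f : H → E} {C : ℝ} (hf : ∀ x y, ‖f x - f y‖ ≤ C * ‖x - y‖) :
    UniformContinuous f :=
  (LipschitzWith.of_dist_le_mul (K := C.toNNReal) fun x y => by
    rw [dist_eq_norm, dist_eq_norm]
    exact (hf x y).trans
      (mul_le_mul_of_nonneg_right (Real.le_coe_toNNReal C) (norm_nonneg _))).uniformContinuous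

lemma eventually_norm_smul_lt {H : Type*} [NormedAddCommGroup H] [NormedSpace ℝ H] (v : H) {δ : ℝ}
    (hδ : 0 < δ) : ∀ᶠ t : ℝ in 𝓝[≠] 0, ‖t • v‖ < δ := by
  have hc : Continuous fun t : ℝ => ‖t • v‖ := by fun_prop
  have ht : Tendsto (fun t : ℝ => ‖t • v‖) (𝓝[≠] 0) (𝓝 0) := by
    simpa using (hc.tendsto 0).mono_left nhdsWithin_le_nhds
  exact ht.eventually_lt_const hδ

section DifferenceQuotient

variable {H : Type*} [NormedAddCommGroup H] [InnerProductSpace ℝ H]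

/-- The difference quotient of `F` at `x` with step `t` in the direction `k`. -/
def diffQuot (F : H → ℝ) (k : H) (t : ℝ) (x : H) : ℝ := t⁻¹ * (F (x + t • k) - F x)

/-- The difference quotients of `F` in the direction `k` converge uniformly on `H` to a uniformly
continuous function. -/
def UnifDiffAlong (F : H → ℝ) (k : H) : Prop :=
  ∃ Q : H → ℝ, UniformContinuous Q ∧ TendstoUniformly (diffQuot F k) Q (𝓝[≠] 0)

lemma abs_diffQuot_sub_diffQuot_le {F : H → ℝ} {C : ℝ}
    (hF : ∀ x y, |F x - F y| ≤ C * ‖x - y‖) (k k' x : H) {t : ℝ} (ht : t ≠ 0) :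
    |diffQuot F k t x - diffQuot F k' t x| ≤ C * ‖k - k'‖ := by
  have h := hF (x + t • k) (x + t • k')
  rw [add_sub_add_left_eq_sub, ← smul_sub, norm_smul, Real.norm_eq_abs] at h
  have h0 : 0 < |t| := abs_pos.2 ht
  have : diffQuot F k t x - diffQuot F k' t x = t⁻¹ * (F (x + t • k) - F (x + t • k')) := by
    unfold diffQuot; ring
  rw [this, abs_mul, abs_inv, inv_mul_le_iff₀ h0]
  linarith

lemma abs_diffQuot_le {F : H → ℝ} {C : ℝ}
    (hF : ∀ x y, |F x - F y| ≤ C * ‖x - y‖) (k x : H) {t : ℝ} (ht : t ≠ 0) :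
    |diffQuot F k t x| ≤ C * ‖k‖ := by
  simpa [diffQuot] using abs_diffQuot_sub_diffQuot_le hF k 0 x ht

lemma uniformContinuous_diffQuot {F : H → ℝ} (hF : UniformContinuous F) (k : H) (t : ℝ) :
    UniformContinuous (diffQuot F k t) := by
  have h1 : UniformContinuous fun x : H => F (x + t • k) :=
    hF.comp (uniformContinuous_id.add uniformContinuous_const)
  exact (h1.sub hF).const_mul' t⁻¹

namespace UnifDiffAlong

lemma zero (F : H → ℝ) : UnifDiffAlong F 0 :=
  ⟨fun _ => 0, uniformContinuous_const, by
    rw [Metric.tendstoUniformly_iff]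
    intro ε hε
    exact Eventually.of_forall fun t x => by simpa [diffQuot] using hε⟩

lemma add {F : H → ℝ} {k k' : H} (hk : UnifDiffAlong F k) (hk' : UnifDiffAlong F k') :
    UnifDiffAlong F (k + k') := by
  obtain ⟨Q, hQ, hlim⟩ := hk
  obtain ⟨Q', hQ', hlim'⟩ := hk'
  refine ⟨fun x => Q x + Q' x, hQ.add hQ', ?_⟩
  rw [Metric.tendstoUniformly_iff] at *
  intro ε hε
  obtain ⟨δ, hδ, hδQ⟩ := Metric.uniformContinuous_iff.1 hQ (ε / 3) (by positivity)
  have hsmall := eventually_norm_smul_lt k' hδ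
  filter_upwards [hlim (ε / 3) (by positivity), hlim' (ε / 3) (by positivity), hsmall]
    with t h1 h2 h3 x
  have e1 := h1 (x + t • k')
  have e2 := h2 x
  have e3 : dist (Q (x + t • k')) (Q x) < ε / 3 := hδQ (by simpa [dist_eq_norm] using h3)
  have key : diffQuot F (k + k') t x = diffQuot F k t (x + t • k') + diffQuot F k' t x := by
    simp only [diffQuot]
    rw [show x + t • (k + k') = x + t • k' + t • k by rw [smul_add]; abel]
    ring
  rw [key]
  rw [Real.dist_eq, abs_lt] at *
  constructor <;> linarith [e1.1, e1.2, e2.1, e2.2, e3.1, e3.2]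

lemma smul {F : H → ℝ} {k : H} (hk : UnifDiffAlong F k) (c : ℝ) :
    UnifDiffAlong F (c • k) := by
  rcases eq_or_ne c 0 with rfl | hc
  · simpa using zero F
  obtain ⟨Q, hQ, hlim⟩ := hk
  refine ⟨fun x => c * Q x, hQ.const_mul' c, ?_⟩
  have htend : Tendsto (fun t : ℝ => t * c) (𝓝[≠] 0) (𝓝[≠] 0) := by
    refine tendsto_nhdsWithin_iff.2 ⟨?_, ?_⟩
    · have : Continuous fun t : ℝ => t * c := by fun_prop
      simpa using (this.tendsto 0).mono_left nhdsWithin_le_nhds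
    · filter_upwards [self_mem_nhdsWithin] with t ht using mul_ne_zero ht hc
  rw [Metric.tendstoUniformly_iff] at *
  intro ε hε
  have hc' : 0 < |c| := abs_pos.2 hc
  filter_upwards [htend.eventually (hlim (ε / |c|) (by positivity)), self_mem_nhdsWithin]
    with t ht ht0 x
  have h := ht x
  have key : diffQuot F (c • k) t x = c * diffQuot F k (t * c) x := by
    have : t ≠ 0 := ht0
    simp only [diffQuot, smul_smul]
    field_simp
  rw [key, Real.dist_eq, ← mul_sub, abs_mul]
  rw [Real.dist_eq, lt_div_iff₀ hc'] at h
  linarith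

lemma of_forall_exists_norm_sub_lt {F : H → ℝ} {C : ℝ} (hC : 0 ≤ C)
    (hF : ∀ x y, |F x - F y| ≤ C * ‖x - y‖) {k : H}
    (hk : ∀ ε > 0, ∃ k', UnifDiffAlong F k' ∧ ‖k - k'‖ < ε) : UnifDiffAlong F k := by
  have hcauchy : UniformCauchySeqOn (diffQuot F k) (𝓝[≠] 0) Set.univ := by
    intro u hu
    obtain ⟨ε, hε, hεu⟩ := Metric.mem_uniformity_dist.1 hu
    obtain ⟨k', ⟨Q, hQ, hlim⟩, hkk'⟩ := hk (ε / (4 * (C + 1))) (by positivity)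
    have hsmall : C * ‖k - k'‖ < ε / 4 := by
      rw [lt_div_iff₀ (by positivity)] at hkk' ⊢
      nlinarith [norm_nonneg (k - k')]
    rw [Metric.tendstoUniformly_iff] at hlim
    have h1 : ∀ᶠ t : ℝ in 𝓝[≠] 0, ∀ x, dist (Q x) (diffQuot F k t x) < ε / 2 := by
      filter_upwards [hlim (ε / 4) (by positivity), self_mem_nhdsWithin] with t ht ht0 x
      have a1 := ht x
      have a2 := abs_diffQuot_sub_diffQuot_le hF k k' x ht0
      rw [Real.dist_eq, abs_lt] at *
      rw [abs_le] at a2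
      constructor <;> linarith [a1.1, a1.2, a2.1, a2.2]
    filter_upwards [h1.prod_mk h1] with m hm x _
    refine hεu ?_
    have b1 := hm.1 x
    have b2 := hm.2 x
    rw [dist_comm] at b1
    linarith [dist_triangle (diffQuot F k m.1 x) (Q x) (diffQuot F k m.2 x)]
  have hpt : ∀ x, ∃ q, Tendsto (fun t => diffQuot F k t x) (𝓝[≠] 0) (𝓝 q) := fun x =>
    cauchy_map_iff_exists_tendsto.1 (hcauchy.cauchy_map (Set.mem_univ x))
  choose Q hQ using hpt
  have hlim : TendstoUniformly (diffQuot F k) Q (𝓝[≠] 0) := by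
    rw [← tendstoUniformlyOn_univ]
    exact hcauchy.tendstoUniformlyOn_of_tendsto fun x _ => hQ x
  refine ⟨Q, hlim.uniformContinuous (Frequently.of_forall fun t => ?_), hlim⟩
  exact uniformContinuous_diffQuot (uniformContinuous_of_norm_sub_le hF) k t

/-- A Lipschitz function that is uniformly differentiable along a family of vectors with dense span
is uniformly differentiable along every vector. -/
lemma of_dense_span {F : H → ℝ} {C : ℝ} (hC : 0 ≤ C)
    (hF : ∀ x y, |F x - F y| ≤ C * ‖x - y‖) {s : Set H} (hs : ∀ k ∈ s, UnifDiffAlong F k)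
    (hdense : (Submodule.span ℝ s).topologicalClosure = ⊤) (k : H) : UnifDiffAlong F k := by
  have hspan : ∀ k ∈ Submodule.span ℝ s, UnifDiffAlong F k := fun k hk =>
    Submodule.span_induction (p := fun k _ => UnifDiffAlong F k) hs (zero F)
      (fun _ _ _ _ h h' => h.add h') (fun c _ _ h => h.smul c) hk
  refine of_forall_exists_norm_sub_lt hC hF fun ε hε => ?_
  have hmem : k ∈ closure (Submodule.span ℝ s : Set H) := by
    rw [← Submodule.topologicalClosure_coe, hdense]
    trivial
  obtain ⟨k', hk', hlt⟩ := Metric.mem_closure_iff.1 hmem ε hε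
  exact ⟨k', hspan k' hk', by rwa [dist_eq_norm] at hlt⟩

end UnifDiffAlong

/-- The second difference quotients of `f` in the directions `h`, `k` converge to the uniform limit
of the difference quotients in the direction `k` of the directional derivative along `h`. -/
lemma tendsto_second_difference {f : H → ℝ} {g : H → H → ℝ} {h k : H}
    (hf : ∀ x (v : H) (s : ℝ), HasDerivAt (fun r : ℝ => f (x + r • v)) (g v (x + s • v)) s)
    {Q : H → ℝ} (hQ : UniformContinuous Q)
    (hlim : TendstoUniformly (diffQuot (g h) k) Q (𝓝[≠] 0)) (x : H) :
    Tendsto (fun t : ℝ => t⁻¹ * (t⁻¹ *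
      (f (x + t • k + t • h) - f (x + t • h) - (f (x + t • k) - f x)))) (𝓝[≠] 0) (𝓝 (Q x)) := by
  rw [Metric.tendsto_nhds]
  intro ε hε
  rw [Metric.tendstoUniformly_iff] at hlim
  obtain ⟨δ, hδ, hδQ⟩ := Metric.uniformContinuous_iff.1 hQ (ε / 2) (by positivity)
  have hsmall := eventually_norm_smul_lt h hδ
  filter_upwards [hlim (ε / 2) (by positivity), hsmall, self_mem_nhdsWithin] with t h1 h2 ht0
  have ht0 : t ≠ 0 := ht0
  have hd : ∀ θ : ℝ, HasDerivAt
      (fun θ : ℝ => f (x + t • k + (θ * t) • h) - f (x + (θ * t) • h))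
      (g h (x + t • k + (θ * t) • h) * t - g h (x + (θ * t) • h) * t) θ := by
    intro θ
    have hm : HasDerivAt (fun θ : ℝ => θ * t) t θ := by simpa using (hasDerivAt_id θ).mul_const t
    exact ((hf (x + t • k) h (θ * t)).comp θ hm).sub ((hf x h (θ * t)).comp θ hm)
  obtain ⟨θ, hθ, hslope⟩ := exists_hasDerivAt_eq_slope _ _ (zero_lt_one (α := ℝ))
    (fun θ _ => (hd θ).continuousAt.continuousWithinAt) (fun θ _ => hd θ)
  simp only [one_mul, zero_mul, zero_smul, add_zero, sub_zero, div_one] at hslope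
  have key : t⁻¹ * (t⁻¹ * (f (x + t • k + t • h) - f (x + t • h) - (f (x + t • k) - f x)))
      = diffQuot (g h) k t (x + (θ * t) • h) := by
    rw [← hslope, diffQuot, add_right_comm]
    field_simp
  rw [key]
  have e1 := h1 (x + (θ * t) • h)
  have e2 : dist (Q (x + (θ * t) • h)) (Q x) < ε / 2 := by
    refine hδQ ?_
    rw [dist_eq_norm, add_sub_cancel_left, mul_smul, norm_smul, Real.norm_eq_abs,
      abs_of_pos hθ.1]
    exact lt_of_le_of_lt (mul_le_of_le_one_left (norm_nonneg _) hθ.2.le) h2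
  rw [dist_comm] at e1
  linarith [dist_triangle (diffQuot (g h) k t (x + (θ * t) • h)) (Q (x + (θ * t) • h)) (Q x)]

/-- Symmetry of the second directional derivatives. -/
lemma second_directional_symm {f : H → ℝ} {g : H → H → ℝ} {h k : H}
    (hf : ∀ x (v : H) (s : ℝ), HasDerivAt (fun r : ℝ => f (x + r • v)) (g v (x + s • v)) s)
    {Q Q' : H → ℝ} (hQ : UniformContinuous Q) (hQ' : UniformContinuous Q')
    (hlim : TendstoUniformly (diffQuot (g h) k) Q (𝓝[≠] 0))
    (hlim' : TendstoUniformly (diffQuot (g k) h) Q' (𝓝[≠] 0)) (x : H) : Q x = Q' x := by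
  refine tendsto_nhds_unique (tendsto_second_difference hf hQ hlim x) ?_
  refine (tendsto_second_difference hf hQ' hlim' x).congr fun t => ?_
  rw [add_right_comm x (t • h) (t • k)]
  ring

lemma abs_inner_sub_inner_le {G : H → H} {L : ℝ} (hG : ∀ x y, ‖G x - G y‖ ≤ L * ‖x - y‖)
    (h x y : H) : |⟪G x, h⟫ - ⟪G y, h⟫| ≤ (L * ‖h‖) * ‖x - y‖ := by
  rw [← inner_sub_left]
  refine (abs_real_inner_le_norm _ _).trans ?_
  nlinarith [mul_le_mul_of_nonneg_right (hG x y) (norm_nonneg h)]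

/-- Uniform weak differentiability of a Lipschitz gradient, organised as a field of bounded
self-adjoint operators. -/
lemma exists_weak_hessian [CompleteSpace H] {f : H → ℝ} {G : H → H}
    (hf : ∀ x, HasGradientAt f (G x) x) {L : ℝ} (hL : 0 ≤ L)
    (hG : ∀ x y, ‖G x - G y‖ ≤ L * ‖x - y‖)
    (hdiff : ∀ h k, UnifDiffAlong (fun x => ⟪G x, h⟫) k) :
    ∃ A : H → H →L[ℝ] H,
      (∀ x : H,
        (∀ u v : H, ⟪A x u, v⟫ = ⟪u, A x v⟫) ∧
        ‖A x‖ ≤ L ∧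
        (∀ h k : H,
          Tendsto (fun t : ℝ => t⁻¹ * ⟪G (x + t • k) - G x, h⟫)
            (𝓝[≠] (0 : ℝ)) (𝓝 ⟪A x k, h⟫))) ∧
      (∀ h k : H, UniformContinuous fun x : H => ⟪A x k, h⟫) := by
  choose Q hQ hlim using hdiff
  have hFlip := abs_inner_sub_inner_le hG
  have hpt : ∀ h k x, Tendsto (fun t : ℝ => diffQuot (fun x => ⟪G x, h⟫) k t x) (𝓝[≠] 0)
      (𝓝 (Q h k x)) := fun h k x => (hlim h k).tendsto_at x
  have hbound : ∀ h k x, |Q h k x| ≤ L * ‖k‖ * ‖h‖ := by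
    intro h k x
    refine le_of_tendsto (hpt h k x).abs ?_
    filter_upwards [self_mem_nhdsWithin] with t ht
    exact (abs_diffQuot_le (hFlip h) k x ht).trans (by linarith)
  have hline : ∀ x (v : H) (s : ℝ),
      HasDerivAt (fun r : ℝ => f (x + r • v)) ⟪G (x + s • v), v⟫ s := by
    intro x v s
    have h1 := (hf (x + s • v)).hasFDerivAt
    have h2 : HasDerivAt (fun r : ℝ => x + r • v) v s := by
      simpa using ((hasDerivAt_id s).smul_const v).const_add x
    have h3 := h1.comp_hasDerivAt s h2
    rw [InnerProductSpace.toDual_apply_apply] at h3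
    exact h3
  have hsymm : ∀ h k x, Q h k x = Q k h x := fun h k x =>
    second_directional_symm (f := f) (g := fun v x => ⟪G x, v⟫)
      hline (hQ h k) (hQ k h) (hlim h k) (hlim k h) x
  have hadd : ∀ h h' k x, Q (h + h') k x = Q h k x + Q h' k x := by
    intro h h' k x
    refine tendsto_nhds_unique (hpt (h + h') k x) (((hpt h k x).add (hpt h' k x)).congr ?_)
    intro t
    simp only [diffQuot, inner_add_right]
    ring
  have hsmul : ∀ (c : ℝ) h k x, Q (c • h) k x = c * Q h k x := by
    intro c h k x
    refine tendsto_nhds_unique (hpt (c • h) k x) (((hpt h k x).const_mul c).congr ?_)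
    intro t
    simp only [diffQuot, real_inner_smul_right]
    ring
  let φ : H → H → H →L[ℝ] ℝ := fun x k =>
    LinearMap.mkContinuous
      { toFun := fun h => Q h k x
        map_add' := fun h h' => hadd h h' k x
        map_smul' := fun c h => hsmul c h k x } (L * ‖k‖) (fun h => hbound h k x)
  have hφ : ∀ x k h, φ x k h = Q h k x := fun _ _ _ => rfl
  let A : H → H →L[ℝ] H := fun x =>
    LinearMap.mkContinuous
      { toFun := fun k => (InnerProductSpace.toDual ℝ H).symm (φ x k)
        map_add' := fun k k' => by
          rw [← map_add]
          congr 1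
          ext h
          simp only [add_apply, hφ]
          rw [hsymm, hadd, hsymm k, hsymm k']
        map_smul' := fun c k => by
          rw [RingHom.id_apply, ← map_smul]
          congr 1
          ext h
          simp only [smul_apply, hφ, smul_eq_mul]
          rw [hsymm, hsmul, hsymm k] } L (fun k => by
        simp only [LinearMap.coe_mk, AddHom.coe_mk, LinearIsometryEquiv.norm_map]
        exact LinearMap.mkContinuous_norm_le _ (by positivity) _)
  have hA : ∀ x k h, ⟪A x k, h⟫ = Q h k x := fun x k h => by
    change ⟪(InnerProductSpace.toDual ℝ H).symm (φ x k), h⟫ = _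
    rw [InnerProductSpace.toDual_symm_apply, hφ]
  refine ⟨A, fun x => ⟨fun u v => ?_, LinearMap.mkContinuous_norm_le _ hL _, fun h k => ?_⟩,
    fun h k => ?_⟩
  · rw [hA, real_inner_comm, hA, hsymm]
  · rw [hA]
    refine (hpt h k x).congr fun t => ?_
    simp only [diffQuot, inner_sub_left]
  · simpa only [hA] using hQ h k

end DifferenceQuotient

section TranslateAverage

variable {H : Type*} [NormedAddCommGroup H] {E : Type*} [NormedAddCommGroup E]
  {Ω : Type*} [TopologicalSpace Ω] [SecondCountableTopology Ω] [MeasurableSpace Ω]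
  [OpensMeasurableSpace Ω] {P : Measure Ω} [IsProbabilityMeasure P] {S : Ω → H} {r C : ℝ}

lemma integrable_comp_sub_of_lipschitz (hS : Continuous S) (hSr : ∀ ω, ‖S ω‖ ≤ r) (hC : 0 ≤ C)
    {f : H → E} (hf : ∀ x y, ‖f x - f y‖ ≤ C * ‖x - y‖) (x : H) :
    Integrable (fun ω => f (x - S ω)) P := by
  have hfc : Continuous f := (uniformContinuous_of_norm_sub_le hf).continuous
  refine Integrable.of_bound (by fun_prop : Continuous _).aestronglyMeasurable (‖f x‖ + C * r)
    (Eventually.of_forall fun ω => ?_)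
  have h1 := hf (x - S ω) x
  rw [sub_sub_cancel_left, norm_neg] at h1
  have h2 := norm_le_norm_add_norm_sub' (f (x - S ω)) (f x)
  have h3 := mul_le_mul_of_nonneg_left (hSr ω) hC
  linarith

variable [NormedSpace ℝ E]

lemma norm_integral_comp_sub_sub_le (hS : Continuous S) (hSr : ∀ ω, ‖S ω‖ ≤ r) (hC : 0 ≤ C)
    {f : H → E} (hf : ∀ x y, ‖f x - f y‖ ≤ C * ‖x - y‖) (x y : H) :
    ‖∫ ω, f (x - S ω) ∂P - ∫ ω, f (y - S ω) ∂P‖ ≤ C * ‖x - y‖ := by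
  rw [← integral_sub (integrable_comp_sub_of_lipschitz hS hSr hC hf x)
    (integrable_comp_sub_of_lipschitz hS hSr hC hf y)]
  refine (norm_integral_le_of_norm_le_const (C := C * ‖x - y‖)
    (Eventually.of_forall fun ω => ?_)).trans (by simp)
  simpa using hf (x - S ω) (y - S ω)

lemma norm_integral_comp_sub_sub_integral_le {S' : Ω → H} {r' d : ℝ} (hS : Continuous S)
    (hSr : ∀ ω, ‖S ω‖ ≤ r) (hS' : Continuous S') (hSr' : ∀ ω, ‖S' ω‖ ≤ r')
    (hd : ∀ ω, ‖S ω - S' ω‖ ≤ d) (hC : 0 ≤ C)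
    {f : H → E} (hf : ∀ x y, ‖f x - f y‖ ≤ C * ‖x - y‖) (x : H) :
    ‖∫ ω, f (x - S ω) ∂P - ∫ ω, f (x - S' ω) ∂P‖ ≤ C * d := by
  rw [← integral_sub (integrable_comp_sub_of_lipschitz hS hSr hC hf x)
    (integrable_comp_sub_of_lipschitz hS' hSr' hC hf x)]
  refine (norm_integral_le_of_norm_le_const (C := C * d)
    (Eventually.of_forall fun ω => ?_)).trans (by simp)
  refine (hf _ _).trans (mul_le_mul_of_nonneg_left ?_ hC)
  rw [sub_sub_sub_cancel_left, norm_sub_rev]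
  exact hd ω

lemma norm_integral_comp_sub_sub_self_le [CompleteSpace E] (hS : Continuous S)
    (hSr : ∀ ω, ‖S ω‖ ≤ r) (hC : 0 ≤ C)
    {f : H → E} (hf : ∀ x y, ‖f x - f y‖ ≤ C * ‖x - y‖) (x : H) :
    ‖∫ ω, f (x - S ω) ∂P - f x‖ ≤ C * r := by
  have h := norm_integral_comp_sub_sub_integral_le (P := P) hS hSr (S' := fun _ => 0) (r' := 0)
    continuous_const (by simp) (d := r) (by simpa using hSr) hC hf x
  simpa using h

end TranslateAverage

lemma norm_gradient_le_of_lipschitz {H : Type*} [NormedAddCommGroup H] [InnerProductSpace ℝ H]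
    [CompleteSpace H] {z : H → ℝ} {C : ℝ} (hC : 0 ≤ C)
    (hz : ∀ x y, ‖z x - z y‖ ≤ C * ‖x - y‖) (x : H) : ‖gradient z x‖ ≤ C := by
  rw [gradient, LinearIsometryEquiv.norm_map]
  refine norm_fderiv_le_of_lip' ℝ hC (Eventually.of_forall fun y => hz y x)

lemma hasGradientAt_integral_comp_sub {H : Type*} [NormedAddCommGroup H] [InnerProductSpace ℝ H]
    [CompleteSpace H] {Ω : Type*} [TopologicalSpace Ω] [SecondCountableTopology Ω]
    [MeasurableSpace Ω] [OpensMeasurableSpace Ω] {P : Measure Ω} [IsProbabilityMeasure P]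
    {S : Ω → H} {r C L : ℝ} (hS : Continuous S) (hSr : ∀ ω, ‖S ω‖ ≤ r) (hC : 0 ≤ C) (hL : 0 ≤ L)
    {z : H → ℝ} (hzd : Differentiable ℝ z) (hz : ∀ x y, ‖z x - z y‖ ≤ C * ‖x - y‖)
    (hDz : ∀ x y, ‖gradient z x - gradient z y‖ ≤ L * ‖x - y‖) (x : H) :
    HasGradientAt (fun x => ∫ ω, z (x - S ω) ∂P) (∫ ω, gradient z (x - S ω) ∂P) x := by
  rw [hasGradientAt_iff_hasFDerivAt]
  have hint := integrable_comp_sub_of_lipschitz (P := P) hS hSr hL hDz x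
  have hcomm : InnerProductSpace.toDual ℝ H (∫ ω, gradient z (x - S ω) ∂P) =
      ∫ ω, InnerProductSpace.toDual ℝ H (gradient z (x - S ω)) ∂P :=
    ((InnerProductSpace.toDual ℝ H).toContinuousLinearEquiv.toContinuousLinearMap.integral_comp_comm
      hint).symm
  rw [hcomm]
  refine hasFDerivAt_integral_of_dominated_of_fderiv_le (bound := fun _ => C)
    (F' := fun x ω => InnerProductSpace.toDual ℝ H (gradient z (x - S ω))) univ_mem
    (Eventually.of_forall fun y =>
      (integrable_comp_sub_of_lipschitz hS hSr hC hz y).aestronglyMeasurable)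
    (integrable_comp_sub_of_lipschitz hS hSr hC hz x) ?_ ?_ (integrable_const _) ?_
  · exact (InnerProductSpace.toDual ℝ H).continuous.comp_aestronglyMeasurable
      hint.aestronglyMeasurable
  · refine Eventually.of_forall fun ω y _ => ?_
    rw [LinearIsometryEquiv.norm_map]
    exact norm_gradient_le_of_lipschitz hC hz _
  · refine Eventually.of_forall fun ω y _ => ?_
    have h1 := (hzd (y - S ω)).hasGradientAt.hasFDerivAt
    exact h1.comp y ((hasFDerivAt_id y).sub_const (S ω))

section ProductDensity

open Measure

/-- The measure on `ℝ` with density `ρ`. -/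
def densityMeasure (ρ : ℝ → ℝ) : Measure ℝ := volume.withDensity fun t => ENNReal.ofReal (ρ t)

lemma densityMeasure_apply {ρ : ℝ → ℝ} (hρ : Integrable ρ) (hρ0 : ∀ t, 0 ≤ ρ t) {s : Set ℝ}
    (hs : MeasurableSet s) : densityMeasure ρ s = ENNReal.ofReal (∫ t in s, ρ t) := by
  rw [densityMeasure, withDensity_apply _ hs,
    ofReal_integral_eq_lintegral_ofReal hρ.integrableOn (Eventually.of_forall hρ0)]

lemma isProbabilityMeasure_densityMeasure {ρ : ℝ → ℝ} (hρ : Integrable ρ) (hρ0 : ∀ t, 0 ≤ ρ t)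
    (hρ1 : ∫ t, ρ t = 1) : IsProbabilityMeasure (densityMeasure ρ) :=
  ⟨by rw [densityMeasure_apply hρ hρ0 MeasurableSet.univ]; simp [hρ1]⟩

lemma integral_densityMeasure {ρ : ℝ → ℝ} (hρ : Measurable ρ) (hρ0 : ∀ t, 0 ≤ ρ t) (f : ℝ → ℝ) :
    ∫ t, f t ∂densityMeasure ρ = ∫ t, ρ t * f t := by
  rw [densityMeasure, integral_withDensity_eq_integral_toReal_smul (by fun_prop) (by simp)]
  simp [hρ0]

lemma pi_densityMeasure {ι : Type*} [Fintype ι] {g : ι → ℝ → ℝ} (hg : ∀ i, Integrable (g i))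
    (hg0 : ∀ i t, 0 ≤ g i t) :
    Measure.pi (fun i => densityMeasure (g i)) =
      volume.withDensity fun y : ι → ℝ => ENNReal.ofReal (∏ i, g i (y i)) := by
  have : ∀ i, SigmaFinite (densityMeasure (g i)) := fun i => by
    unfold densityMeasure; infer_instance
  refine pi_eq fun t ht => ?_
  rw [withDensity_apply _ (MeasurableSet.univ_pi ht), volume_pi, restrict_pi_pi,
    ← ofReal_integral_eq_lintegral_ofReal
      (Integrable.fintype_prod_dep fun i => (hg i).integrableOn)
      (Eventually.of_forall fun y => Finset.prod_nonneg fun i _ => hg0 i _),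
    integral_fintype_prod_eq_prod,
    ENNReal.ofReal_prod_of_nonneg fun i _ => integral_nonneg (hg0 i)]
  exact Finset.prod_congr rfl fun i _ => (densityMeasure_apply (hg i) (hg0 i) (ht i)).symm

lemma map_sub_mul_densityMeasure {ρ : ℝ → ℝ} (hρ : Measurable ρ) {a : ℝ} (ha : 0 < a) (c : ℝ) :
    (densityMeasure ρ).map (fun r => c - a * r) =
      densityMeasure fun y => a⁻¹ * ρ ((c - y) / a) := by
  ext s hs
  rw [map_apply (by fun_prop) hs, densityMeasure, densityMeasure, withDensity_apply _ hs,
    withDensity_apply _ (hs.preimage (by fun_prop)), ← lintegral_indicator hs,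
    ← lintegral_indicator (hs.preimage (by fun_prop)),
    ← lintegral_sub_left_eq_self
      (s.indicator fun y => ENNReal.ofReal (a⁻¹ * ρ ((c - y) / a))) c]
  conv_rhs => rw [← Real.smul_map_volume_mul_left ha.ne']
  rw [lintegral_smul_measure, lintegral_map _ (by fun_prop), smul_eq_mul,
    ← lintegral_const_mul]
  · refine lintegral_congr fun r => ?_
    by_cases hr : c - a * r ∈ s
    · rw [Set.indicator_of_mem (by exact hr), Set.indicator_of_mem hr, sub_sub_cancel,
        mul_div_cancel_left₀ _ ha.ne', abs_of_pos ha, ← ENNReal.ofReal_mul ha.le,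
        mul_inv_cancel_left₀ ha.ne']
    · rw [Set.indicator_of_notMem (by exact hr), Set.indicator_of_notMem hr, mul_zero]
  · exact (Measurable.indicator (by fun_prop) hs).comp (by fun_prop)
  · exact (Measurable.indicator (by fun_prop) hs).comp (by fun_prop)

lemma infinitePi_map_fin {X Y : Type*} [MeasurableSpace X] [MeasurableSpace Y] (μ : Measure X)
    [IsProbabilityMeasure μ] (k : ℕ) {f : Fin k → X → Y} (hf : ∀ i, Measurable (f i)) :
    (infinitePi fun _ : ℕ => μ).map (fun s (i : Fin k) => f i (s i)) =
      Measure.pi fun i => μ.map (f i) := by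
  have : ∀ i, IsProbabilityMeasure (μ.map (f i)) := fun i =>
    isProbabilityMeasure_map (hf i).aemeasurable
  refine (pi_eq fun t ht => ?_).symm
  have hpre : (fun (s : ℕ → X) (i : Fin k) => f i (s i)) ⁻¹' Set.univ.pi t =
      Set.pi (Finset.range k) fun n => if h : n < k then f ⟨n, h⟩ ⁻¹' t ⟨n, h⟩ else Set.univ := by
    ext s
    simp only [Set.mem_preimage, Set.mem_pi, Finset.coe_range, Set.mem_Iio]
    constructor
    · intro h n hn
      simpa [hn] using h ⟨n, hn⟩
    · intro h i
      simpa using h i i.2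
  rw [map_apply (by fun_prop) (MeasurableSet.univ_pi ht), hpre, infinitePi_pi, Finset.prod_range]
  · refine Finset.prod_congr rfl fun i _ => ?_
    rw [map_apply (hf i) (ht i)]
    simp
  · intro n hn
    rw [dif_pos (Finset.mem_range.1 hn)]
    exact (ht _).preimage (hf _)

lemma infinitePi_prod_map_update {ι X : Type*} [DecidableEq ι] [MeasurableSpace X] (μ : Measure X)
    [IsProbabilityMeasure μ] (i : ι) :
    ((infinitePi fun _ : ι => μ).prod μ).map (fun p => Function.update p.1 i p.2) =
      infinitePi fun _ : ι => μ := by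
  have hmeas : Measurable fun p : (ι → X) × X => Function.update p.1 i p.2 := by
    refine measurable_pi_lambda _ fun j => ?_
    rcases eq_or_ne j i with rfl | hj
    · simpa using measurable_snd
    · simp only [Function.update_of_ne hj]
      fun_prop
  refine eq_infinitePi _ fun s t ht => ?_
  rw [map_apply hmeas (.pi s.countable_toSet fun j _ => ht j)]
  by_cases hi : i ∈ s
  · have hpre : (fun p : (ι → X) × X => Function.update p.1 i p.2) ⁻¹' (s : Set ι).pi t =
        ((s.erase i : Finset ι) : Set ι).pi t ×ˢ t i := by
      ext p
      simp only [Set.mem_preimage, Set.mem_pi, Finset.mem_coe, Set.mem_prod, Finset.mem_erase]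
      constructor
      · intro h
        exact ⟨fun j hj => by simpa [hj.1] using h j hj.2, by simpa using h i hi⟩
      · rintro ⟨h, h'⟩ j hj
        rcases eq_or_ne j i with rfl | hji
        · simpa using h'
        · simpa [hji] using h j ⟨hji, hj⟩
    rw [hpre, prod_prod, infinitePi_pi _ fun j _ => ht j, Finset.prod_erase_mul _ _ hi]
  · have hpre : (fun p : (ι → X) × X => Function.update p.1 i p.2) ⁻¹' (s : Set ι).pi t =
        (s : Set ι).pi t ×ˢ Set.univ := by
      ext p
      simp only [Set.mem_preimage, Set.mem_pi, Finset.mem_coe, Set.mem_prod, Set.mem_univ, and_true]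
      refine forall₂_congr fun j hj => ?_
      rw [Function.update_of_ne (by rintro rfl; exact hi hj)]
    rw [hpre, prod_prod, infinitePi_pi _ fun j _ => ht j, measure_univ, mul_one]

end ProductDensity

section OneDimensionalMollification

variable {H : Type*} [NormedAddCommGroup H] [InnerProductSpace ℝ H]

lemma UnifDiffAlong.of_hasDerivAt {F Q : H → ℝ} {v : H} (hQ : UniformContinuous Q)
    (hF : ∀ x (t : ℝ), HasDerivAt (fun r : ℝ => F (x + r • v)) (Q (x + t • v)) t) :
    UnifDiffAlong F v := by
  refine ⟨Q, hQ, ?_⟩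
  rw [Metric.tendstoUniformly_iff]
  intro ε hε
  obtain ⟨δ, hδ, hδQ⟩ := Metric.uniformContinuous_iff.1 hQ ε hε
  have hsmall := eventually_norm_smul_lt v hδ
  filter_upwards [hsmall, self_mem_nhdsWithin] with t h2 ht0 x
  have ht0 : t ≠ 0 := ht0
  have hd : ∀ θ : ℝ, HasDerivAt (fun θ : ℝ => F (x + (θ * t) • v)) (Q (x + (θ * t) • v) * t) θ := by
    intro θ
    have hm : HasDerivAt (fun θ : ℝ => θ * t) t θ := by simpa using (hasDerivAt_id θ).mul_const t
    exact (hF x (θ * t)).comp θ hm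
  obtain ⟨θ, hθ, hslope⟩ := exists_hasDerivAt_eq_slope _ _ (zero_lt_one (α := ℝ))
    (fun θ _ => (hd θ).continuousAt.continuousWithinAt) (fun θ _ => hd θ)
  simp only [one_mul, zero_mul, zero_smul, add_zero, sub_zero, div_one] at hslope
  have key : diffQuot F v t x = Q (x + (θ * t) • v) := by
    rw [diffQuot, ← hslope]
    field_simp
  rw [key, dist_comm]
  refine hδQ ?_
  rw [dist_eq_norm, add_sub_cancel_left, mul_smul, norm_smul, Real.norm_eq_abs, abs_of_pos hθ.1]
  exact lt_of_le_of_lt (mul_le_of_le_one_left (norm_nonneg _) hθ.2.le) h2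

/-- Mollifying a Lipschitz function along a direction `v` makes it uniformly differentiable along
`v`. -/
lemma unifDiffAlong_integral_mul {ρ : ℝ → ℝ} (hρ : ContDiff ℝ 1 ρ) (hρc : HasCompactSupport ρ)
    {G : H → ℝ} {C : ℝ} (hG : ∀ x y, |G x - G y| ≤ C * ‖x - y‖) (v : H) :
    UnifDiffAlong (fun x => ∫ r, ρ r * G (x - r • v)) v := by
  have hGc : Continuous G := (uniformContinuous_of_norm_sub_le hG).continuous
  have hρ' : Continuous (deriv ρ) := hρ.continuous_deriv le_rfl
  have hint : ∀ x, Integrable fun r => deriv ρ r * G (x - r • v) := fun x =>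
    Continuous.integrable_of_hasCompactSupport (by fun_prop) (hρc.deriv.mul_right)
  refine UnifDiffAlong.of_hasDerivAt (Q := fun x => ∫ r, deriv ρ r * G (x - r • v)) ?_ ?_
  · refine uniformContinuous_of_norm_sub_le (C := (∫ r, |deriv ρ r|) * C) fun x y => ?_
    rw [← integral_sub (hint x) (hint y), mul_assoc, ← integral_mul_const]
    refine norm_integral_le_of_norm_le
      ((hρ'.abs.integrable_of_hasCompactSupport hρc.deriv.abs).mul_const _)
      (Eventually.of_forall fun r => ?_)
    rw [← mul_sub, norm_mul]
    refine mul_le_mul_of_nonneg_left ?_ (abs_nonneg _)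
    simpa using hG (x - r • v) (y - r • v)
  · intro x t
    have hφ : Continuous fun τ : ℝ => G (x + τ • v) := by fun_prop
    have h := hρc.hasDerivAt_convolution_left (ContinuousLinearMap.mul ℝ ℝ) hρ
      (hφ.locallyIntegrable (μ := volume)) t
    have hconv : ∀ (f : ℝ → ℝ) (t : ℝ), convolution f (fun τ : ℝ => G (x + τ • v))
        (ContinuousLinearMap.mul ℝ ℝ) volume t = ∫ r, f r * G (x + t • v - r • v) := by
      intro f t
      rw [convolution_def]
      refine integral_congr_ae (Eventually.of_forall fun r => ?_)
      simp only [ContinuousLinearMap.mul_apply', sub_smul, add_sub_assoc]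
    rw [hconv] at h
    exact h.congr_of_eventuallyEq (Eventually.of_forall fun t => (hconv ρ t).symm)

end OneDimensionalMollification

section RandomSeries

open Measure

/-- The projection of `ℝ` onto `[-1, 1]`. -/
def clampUnit (t : ℝ) : ℝ := max (-1) (min t 1)

@[fun_prop]
lemma continuous_clampUnit : Continuous clampUnit := by
  unfold clampUnit; fun_prop

lemma abs_clampUnit_le (t : ℝ) : |clampUnit t| ≤ 1 :=
  abs_le.2 ⟨le_max_left _ _, max_le (by norm_num) (min_le_right _ _)⟩

lemma clampUnit_of_mem {t : ℝ} (ht : t ∈ Set.Icc (-1 : ℝ) 1) : clampUnit t = t := by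
  rw [clampUnit, min_eq_left ht.2, max_eq_right ht.1]

lemma clampUnit_zero : clampUnit 0 = 0 := clampUnit_of_mem (by simp)

variable {H : Type*} [NormedAddCommGroup H] [InnerProductSpace ℝ H]

/-- The series `∑ i, a i * s i • e i`, with the coordinates `s i` truncated to `[-1, 1]`. -/
def truncSeries (e : ℕ → H) (a s : ℕ → ℝ) : H := ∑' i, (a i * clampUnit (s i)) • e i

variable {e : ℕ → H} {a : ℕ → ℝ} {r : ℝ}

lemma norm_truncSeries_term_le (he : Orthonormal ℝ e) (ha0 : ∀ i, 0 ≤ a i) (i : ℕ) (t : ℝ) :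
    ‖(a i * clampUnit t) • e i‖ ≤ a i := by
  rw [norm_smul, he.1 i, mul_one, norm_mul, Real.norm_of_nonneg (ha0 i)]
  exact mul_le_of_le_one_right (ha0 i) (abs_clampUnit_le t)

lemma norm_truncSeries_le (he : Orthonormal ℝ e) (ha0 : ∀ i, 0 ≤ a i) (har : HasSum a r)
    (s : ℕ → ℝ) : ‖truncSeries e a s‖ ≤ r :=
  tsum_of_norm_bounded har fun i => norm_truncSeries_term_le he ha0 i (s i)

lemma continuous_truncSeries [CompleteSpace H] (he : Orthonormal ℝ e) (ha0 : ∀ i, 0 ≤ a i)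
    (ha : Summable a) : Continuous (truncSeries e a) :=
  continuous_tsum (fun i => by fun_prop) ha fun i s => norm_truncSeries_term_le he ha0 i (s i)

lemma truncSeries_update [CompleteSpace H] (he : Orthonormal ℝ e) (ha0 : ∀ i, 0 ≤ a i)
    (ha : Summable a) (s : ℕ → ℝ) (i : ℕ) (t : ℝ) :
    truncSeries e a (Function.update s i t) =
      truncSeries e a (Function.update s i 0) + (a i * clampUnit t) • e i := by
  have h0 : HasSum (fun j => (a j * clampUnit (Function.update s i 0 j)) • e j)
      (truncSeries e a (Function.update s i 0)) :=
    (Summable.of_norm_bounded ha fun j => norm_truncSeries_term_le he ha0 j _).hasSum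
  have h1 := h0.add (hasSum_pi_single i ((a i * clampUnit t) • e i))
  refine Eq.trans (tsum_congr fun j => ?_) h1.tsum_eq
  rcases eq_or_ne j i with rfl | hj
  · simp [clampUnit_zero]
  · simp [hj]

lemma unifDiffAlong_integral_comp_sub_truncSeries [CompleteSpace H] (he : Orthonormal ℝ e)
    (ha0 : ∀ i, 0 < a i) (har : HasSum a r) {ρ : ℝ → ℝ} (hρ : ContDiff ℝ 1 ρ)
    (hρsupp : Function.support ρ ⊆ Set.Icc (-1 : ℝ) 1) (hρ0 : ∀ t, 0 ≤ ρ t)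
    [IsProbabilityMeasure (densityMeasure ρ)] {g : H → ℝ} {C : ℝ} (hC : 0 ≤ C)
    (hg : ∀ x y, |g x - g y| ≤ C * ‖x - y‖) (i : ℕ) :
    UnifDiffAlong
      (fun x => ∫ s, g (x - truncSeries e a s) ∂(infinitePi fun _ : ℕ => densityMeasure ρ))
      (e i) := by
  set P := infinitePi fun _ : ℕ => densityMeasure ρ with hP
  have ha0' : ∀ i, 0 ≤ a i := fun i => (ha0 i).le
  have hS : Continuous (truncSeries e a) := continuous_truncSeries he ha0' har.summable
  have hSr := norm_truncSeries_le he ha0' har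
  have hgc : Continuous g := (uniformContinuous_of_norm_sub_le hg).continuous
  have hup : Continuous fun p : (ℕ → ℝ) × ℝ => Function.update p.1 i p.2 :=
    continuous_fst.update i continuous_snd
  have hup0 : Continuous fun s : ℕ → ℝ => Function.update s i 0 :=
    continuous_id.update i continuous_const
  let G : H → ℝ := fun x => ∫ s, g (x - truncSeries e a (Function.update s i 0)) ∂P
  have hG : ∀ x y, |G x - G y| ≤ C * ‖x - y‖ := fun x y =>
    norm_integral_comp_sub_sub_le (P := P) (f := g)
      (S := fun s => truncSeries e a (Function.update s i 0)) (hS.comp hup0) (fun s => hSr _)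
      hC hg x y
  have hρc : HasCompactSupport ρ :=
    HasCompactSupport.of_support_subset_isCompact isCompact_Icc hρsupp
  have hrepr : ∀ x, ∫ s, g (x - truncSeries e a s) ∂P = ∫ t, ρ t * G (x - t • (a i • e i)) := by
    intro x
    have hmap := infinitePi_prod_map_update (densityMeasure ρ) i
    calc ∫ s, g (x - truncSeries e a s) ∂P
        = ∫ p : (ℕ → ℝ) × ℝ, g (x - truncSeries e a (Function.update p.1 i p.2))
            ∂(P.prod (densityMeasure ρ)) := by
          conv_lhs => rw [hP, ← hmap]
          rw [integral_map hup.measurable.aemeasurable]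
          exact (hgc.comp (by fun_prop)).aestronglyMeasurable
      _ = ∫ t, G (x - (a i * clampUnit t) • e i) ∂(densityMeasure ρ) := by
          rw [integral_prod_symm _ (integrable_comp_sub_of_lipschitz (f := g)
            (S := fun p : (ℕ → ℝ) × ℝ => truncSeries e a (Function.update p.1 i p.2))
            (hS.comp hup) (fun p => hSr _) hC hg x)]
          refine integral_congr_ae (Eventually.of_forall fun t => ?_)
          refine integral_congr_ae (Eventually.of_forall fun s => ?_)
          simp only
          rw [truncSeries_update he ha0' har.summable, sub_add_eq_sub_sub_swap]
      _ = ∫ t, ρ t * G (x - t • (a i • e i)) := by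
          rw [integral_densityMeasure hρ.continuous.measurable hρ0]
          refine integral_congr_ae (Eventually.of_forall fun t => ?_)
          simp only
          by_cases ht : ρ t = 0
          · simp [ht]
          · rw [clampUnit_of_mem (hρsupp ht), smul_smul, mul_comm t]
  simp only [hrepr]
  have h := (unifDiffAlong_integral_mul hρ hρc hG (a i • e i)).smul (a i)⁻¹
  rwa [smul_smul, inv_mul_cancel₀ (ha0 i).ne', one_smul] at h

lemma partialConv_eq_integral {ρ : ℝ → ℝ} (hρ : Continuous ρ)
    (hρsupp : Function.support ρ ⊆ Set.Icc (-1 : ℝ) 1) (hρ0 : ∀ t, 0 ≤ ρ t)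
    [IsProbabilityMeasure (densityMeasure ρ)] {η : ℝ} (hη : 0 < η) {z : H → ℝ}
    (hz : Continuous z) (k : ℕ) (x : H) :
    partialConv e ρ η k z x =
      ∫ s, z (x - ∑ i ∈ Finset.range k, (η / 2 ^ (i + 1) * clampUnit (s i)) • e i)
        ∂(infinitePi fun _ : ℕ => densityMeasure ρ) := by
  let a : ℕ → ℝ := fun i => η / 2 ^ (i + 1)
  have ha : ∀ i, 0 < a i := fun i => by positivity
  let c : Fin k → ℝ := fun i => ⟪x, e i⟫
  let w : (Fin k → ℝ) → ℝ := fun y => ∏ i : Fin k, (a i)⁻¹ * ρ ((c i - y i) / a i)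
  let Φ : (Fin k → ℝ) → H := fun y =>
    x - ∑ i : Fin k, (a i * clampUnit ((c i - y i) / a i)) • e i
  have hw0 : ∀ y, 0 ≤ w y := fun y =>
    Finset.prod_nonneg fun i _ => mul_nonneg (inv_nonneg.2 (ha i).le) (hρ0 _)
  have hwc : Continuous w := by
    refine continuous_finsetProd _ fun i _ => ?_
    fun_prop
  have hΦc : Continuous Φ := by fun_prop
  have hρi : Integrable ρ := hρ.integrable_of_hasCompactSupport
    (HasCompactSupport.of_support_subset_isCompact isCompact_Icc hρsupp)
  have hmap : (infinitePi fun _ : ℕ => densityMeasure ρ).map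
      (fun s (i : Fin k) => c i - a i * s i) =
      volume.withDensity fun y => ENNReal.ofReal (w y) := by
    rw [infinitePi_map_fin (densityMeasure ρ) k (f := fun i r => c i - a i * r)
      (fun i => by fun_prop)]
    simp only [map_sub_mul_densityMeasure hρ.measurable (ha _)]
    refine pi_densityMeasure (fun i => ?_) fun i t =>
      mul_nonneg (inv_nonneg.2 (ha i).le) (hρ0 _)
    exact (((hρi.comp_div (ha i).ne').comp_sub_left (c i))).const_mul _
  calc partialConv e ρ η k z x = ∫ y, w y * z (Φ y) := by
        rw [partialConv]
        refine integral_congr_ae (Eventually.of_forall fun y => ?_)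
        change z _ * w y = w y * z (Φ y)
        rw [mul_comm]
        by_cases hwy : w y = 0
        · simp [hwy]
        congr 2
        have hmem : ∀ i : Fin k, (c i - y i) / a i ∈ Set.Icc (-1 : ℝ) 1 := fun i =>
          hρsupp fun h0 => hwy (Finset.prod_eq_zero (Finset.mem_univ i) (by rw [h0, mul_zero]))
        have hsum : ∑ i : Fin k, (a i * clampUnit ((c i - y i) / a i)) • e i =
            ∑ i : Fin k, c i • e i - ∑ i : Fin k, y i • e i := by
          rw [← Finset.sum_sub_distrib]
          exact Finset.sum_congr rfl fun i _ => by
            rw [clampUnit_of_mem (hmem i), mul_div_cancel₀ _ (ha i).ne', sub_smul]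
        simp only [Φ, hsum, c]
        abel
    _ = ∫ y, z (Φ y) ∂(volume.withDensity fun y => ENNReal.ofReal (w y)) := by
        rw [integral_withDensity_eq_integral_toReal_smul (by fun_prop) (by simp)]
        simp [hw0]
    _ = _ := by
        have hzΦ : Continuous fun y => z (Φ y) := hz.comp hΦc
        have hmeas : Measurable fun (s : ℕ → ℝ) (i : Fin k) => c i - a i * s i :=
          measurable_pi_lambda _ fun i => ((measurable_pi_apply (i : ℕ)).const_mul _).const_sub _
        rw [← hmap, integral_map hmeas.aemeasurable hzΦ.aestronglyMeasurable]
        refine integral_congr_ae (Eventually.of_forall fun s => ?_)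
        simp only [Φ, Finset.sum_range]
        refine congrArg z (congrArg (x - ·) (Finset.sum_congr rfl fun i _ => ?_))
        rw [sub_sub_cancel, mul_div_cancel_left₀ _ (ha i).ne']

end RandomSeries

/-- **Regularity of the Lions-type partial convolution approximation** (Lemma 6.2, the
regularity assertions for `z^η`). Let `H` be a separable real Hilbert space with
orthonormal basis `(e_i)`, and `z : H → ℝ` Fréchet differentiable, `L₀`-Lipschitz, with
`L₁`-Lipschitz gradient. Then the partial convolutions `z^{η,k}` converge uniformly to a
function `z^η` which is Fréchet differentiable, `L₀`-Lipschitz with `L₁`-Lipschitz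
gradient; `sup|z^η - z| ≤ L₀η`, `sup‖Dz^η - Dz‖ ≤ L₁η`; and `z^η` has a weak second
order derivative: bounded self-adjoint operators `A(x)` with `‖A(x)‖ ≤ L₁`,
`lim_{t→0} t⁻¹⟨Dz^η(x+tk) - Dz^η(x), h⟩ = ⟨A(x)k, h⟩`, and `x ↦ ⟨A(x)k, h⟩` uniformly
continuous. -/
theorem partialConv_regularity {H : Type*} [NormedAddCommGroup H]
    [InnerProductSpace ℝ H] [CompleteSpace H]
    (e : ℕ → H) (he : Orthonormal ℝ e)
    (hbasis : (Submodule.span ℝ (Set.range e)).topologicalClosure = ⊤)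
    (z : H → ℝ) (hzdiff : Differentiable ℝ z)
    (L₀ L₁ : ℝ) (hL₀ : 0 ≤ L₀) (hL₁ : 0 ≤ L₁)
    (hzlip : ∀ x y : H, |z x - z y| ≤ L₀ * ‖x - y‖)
    (hDzlip : ∀ x y : H, ‖gradient z x - gradient z y‖ ≤ L₁ * ‖x - y‖)
    (ρ : ℝ → ℝ) (hρsm : ContDiff ℝ (⊤ : ℕ∞) ρ)
    (hρsupp : Function.support ρ ⊆ Set.Icc (-1 : ℝ) 1) (hρnn : ∀ t, 0 ≤ ρ t)
    (hρint : (∫ t, ρ t) = 1)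
    (η : ℝ) (hη : 0 < η) :
    ∃ zη : H → ℝ,
      -- (a) uniform convergence of `z^{η,k}` to `z^η` and regularity of `z^η`
      (∀ ε > (0 : ℝ), ∃ N : ℕ, ∀ k ≥ N, ∀ x : H, |partialConv e ρ η k z x - zη x| ≤ ε) ∧
      Differentiable ℝ zη ∧
      (∀ x y : H, |zη x - zη y| ≤ L₀ * ‖x - y‖) ∧
      (∀ x y : H, ‖gradient zη x - gradient zη y‖ ≤ L₁ * ‖x - y‖) ∧
      -- (b) closeness to `z`
      (∀ x : H, |zη x - z x| ≤ L₀ * η) ∧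
      (∀ x : H, ‖gradient zη x - gradient z x‖ ≤ L₁ * η) ∧
      -- (c) weak second order derivative
      ∃ A : H → H →L[ℝ] H,
        (∀ x : H,
          (∀ u v : H, ⟪A x u, v⟫ = ⟪u, A x v⟫) ∧
          ‖A x‖ ≤ L₁ ∧
          (∀ h k : H,
            Tendsto (fun t : ℝ => t⁻¹ * ⟪gradient zη (x + t • k) - gradient zη x, h⟫)
              (𝓝[≠] (0 : ℝ)) (𝓝 ⟪A x k, h⟫))) ∧
        (∀ h k : H, UniformContinuous fun x : H => ⟪A x k, h⟫) := by
  have hρc : HasCompactSupport ρ :=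
    HasCompactSupport.of_support_subset_isCompact isCompact_Icc hρsupp
  have : IsProbabilityMeasure (densityMeasure ρ) := isProbabilityMeasure_densityMeasure
    (hρsm.continuous.integrable_of_hasCompactSupport hρc) hρnn hρint
  let a : ℕ → ℝ := fun i => η / 2 ^ (i + 1)
  have ha0 : ∀ i, 0 < a i := fun i => by positivity
  have ha0' : ∀ i, 0 ≤ a i := fun i => (ha0 i).le
  have har : HasSum a η := by
    refine (hasSum_geometric_two' η).congr_fun fun i => ?_
    simp only [a, pow_succ]
    field_simp
  let P := Measure.infinitePi fun _ : ℕ => densityMeasure ρ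
  let S : (ℕ → ℝ) → H := truncSeries e a
  have hS : Continuous S := continuous_truncSeries he ha0' har.summable
  have hSr : ∀ s, ‖S s‖ ≤ η := norm_truncSeries_le he ha0' har
  have hgrad : ∀ x, HasGradientAt (fun x => ∫ s, z (x - S s) ∂P)
      (∫ s, gradient z (x - S s) ∂P) x :=
    hasGradientAt_integral_comp_sub hS hSr hL₀ hL₁ hzdiff hzlip hDzlip
  have hgrad_eq : ∀ x, gradient (fun x => ∫ s, z (x - S s) ∂P) x =
      ∫ s, gradient z (x - S s) ∂P := fun x => (hgrad x).gradient
  have hgrad_lip : ∀ x y, ‖∫ s, gradient z (x - S s) ∂P - ∫ s, gradient z (y - S s) ∂P‖ ≤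
      L₁ * ‖x - y‖ := norm_integral_comp_sub_sub_le hS hSr hL₁ hDzlip
  refine ⟨fun x => ∫ s, z (x - S s) ∂P, ?_, fun x => (hgrad x).differentiableAt,
    norm_integral_comp_sub_sub_le (f := z) hS hSr hL₀ hzlip, ?_,
    norm_integral_comp_sub_sub_self_le (f := z) hS hSr hL₀ hzlip, ?_, ?_⟩
  · intro ε hε
    have hunif := tendstoUniformly_tsum_nat har.summable fun i (s : ℕ → ℝ) =>
      norm_truncSeries_term_le he ha0' i (s i)
    rw [Metric.tendstoUniformly_iff] at hunif
    obtain ⟨N, hN⟩ := eventually_atTop.1 (hunif (ε / (L₀ + 1)) (by positivity))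
    refine ⟨N, fun k hk x => ?_⟩
    rw [partialConv_eq_integral hρsm.continuous hρsupp hρnn hη hzdiff.continuous]
    have hsum : ∀ s : ℕ → ℝ,
        ‖∑ i ∈ Finset.range k, (a i * clampUnit (s i)) • e i‖ ≤ ∑ i ∈ Finset.range k, a i :=
      fun s => norm_sum_le_of_le _ fun i _ => norm_truncSeries_term_le he ha0' i (s i)
    refine (norm_integral_comp_sub_sub_integral_le (f := z) (by fun_prop) hsum hS hSr
      (d := ε / (L₀ + 1)) (fun s => ?_) hL₀ hzlip x).trans ?_
    · rw [← dist_eq_norm, dist_comm]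
      exact (hN k hk s).le
    · rw [mul_div_assoc', div_le_iff₀ (by positivity)]
      nlinarith
  · intro x y
    rw [hgrad_eq, hgrad_eq]
    exact hgrad_lip x y
  · intro x
    rw [hgrad_eq]
    exact norm_integral_comp_sub_sub_self_le hS hSr hL₁ hDzlip x
  · simp only [hgrad_eq]
    refine exists_weak_hessian hgrad hL₁ hgrad_lip fun h k => ?_
    have hcomm : ∀ x, ⟪∫ s, gradient z (x - S s) ∂P, h⟫ = ∫ s, ⟪gradient z (x - S s), h⟫ ∂P := by
      intro x
      rw [real_inner_comm,
        ← integral_inner (integrable_comp_sub_of_lipschitz hS hSr hL₁ hDzlip x) h]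
      simp only [real_inner_comm]
    refine UnifDiffAlong.of_dense_span (by positivity) (abs_inner_sub_inner_le hgrad_lip h) ?_
      hbasis k
    rintro _ ⟨i, rfl⟩
    simp only [hcomm]
    exact unifDiffAlong_integral_comp_sub_truncSeries he ha0 har (hρsm.of_le (by simp)) hρsupp hρnn
      (by positivity) (abs_inner_sub_inner_le hDzlip h) i

end
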